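/- arXiv:2303.00671 — 3 statements merged into one kernel-verified Lean document; each statement's English description precedes it below -/
import Mathlib

section
/- Let μ_n be probability measures on Ξ_n with limsup_{n→∞} n·ℐ_n(μ_n) < ∞. Then for every sufficiently small ε ∈ (0,1), limsup_{n→∞} n·μ_n(Ξ_n \ ∪_{z∈𝒫} Q^n_ε(z)) < ∞, where 𝒫 denotes the set of critical points of F. -/
/-!
Write `π = π_n`, `R = R_n`. Detailed balance gives, for neighbours `x, y`,
`π(x) R(x,y) = √(π(x) π(y))`, so that expanding the square in `ℐ_n` and using
`2 √(μ(x) μ(y)) ≤ μ(x) + μ(y)` yields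
`ℐ_n(μ) ≥ ∑_x μ(x) ∑_{y ∼ x} (R(x,y) - 1)` (`edge_bound`, `IT_lower`).

By periodicity `F` has a bounded second derivative, and Taylor's formula
(`taylor_bound`) shows `R(x, x ± eᵢ/n) ≥ e^{∓ ∂ᵢF(x)/2} (1 - M/(2n))`. Hence
the inner sum is at least `G(x) - C/n`, where `G(x) = ∑ᵢ 2 (cosh(∂ᵢF(x)/2) - 1)`
(`rate_lower`). Since `μ_n` has mass one, `∑_x μ_n(x) G(x) ≤ ℐ_n(μ_n) + C/n`.

The function `G` is continuous, nonnegative, and vanishes only at critical points; by compactness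
it is bounded below by some `c > 0` off the cubes around them (`GT_lower_off_cubes`).
So `c · n · μ_n(complement of the cubes) ≤ n ℐ_n(μ_n) + C`.
-/

open Filter MeasureTheory
open scoped ENNReal Classical

noncomputable section

/-- Discretization of the torus `𝕋^d = ℝ^d/ℤ^d`: the points `k/n`, `k ∈ {0,…,n-1}^d`,
taken as representatives in the fundamental domain `[0,1)^d`. -/
def XiT (d n : ℕ) : Finset (Fin d → ℝ) :=
  (Finset.univ : Finset (Fin d → Fin n)).image fun k i => (k i : ℝ) / n

/-- `x` and `y` are nearest neighbours of the discretized torus: `y - x ≡ ±eᵢ/n mod ℤ^d`. -/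
def NbrT (d n : ℕ) (x y : Fin d → ℝ) : Prop :=
  ∃ i : Fin d, ∃ s : ℝ, (s = 1 ∨ s = -1) ∧ ∃ v : Fin d → ℤ,
    ∀ j, y j = x j + (if j = i then s / n else 0) + (v j : ℝ)

/-- Partition function `Z_{F,n}`. -/
def ZT (d : ℕ) (F : (Fin d → ℝ) → ℝ) (n : ℕ) : ℝ :=
  ∑ x ∈ XiT d n, Real.exp (-(n : ℝ) * F x)

/-- Stationary measure `π_n(x) = e^{-nF(x)}/Z_{F,n}`. -/
def piT (d : ℕ) (F : (Fin d → ℝ) → ℝ) (n : ℕ) (x : Fin d → ℝ) : ℝ :=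
  Real.exp (-(n : ℝ) * F x) / ZT d F n

/-- Jump rates `R_n(x,y) = e^{-(n/2)(F(y)-F(x))}` for nearest neighbours, `0` otherwise. -/
def RT (d : ℕ) (F : (Fin d → ℝ) → ℝ) (n : ℕ) (x y : Fin d → ℝ) : ℝ :=
  if NbrT d n x y then Real.exp (-((n : ℝ) / 2) * (F y - F x)) else 0

/-- Level-two large deviations rate functional `ℐ_n`. -/
def IT (d : ℕ) (F : (Fin d → ℝ) → ℝ) (n : ℕ) (μ : (Fin d → ℝ) → ℝ) : ℝ :=
  (1 / 2) * ∑ x ∈ XiT d n, ∑ y ∈ (XiT d n).erase x,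
    piT d F n x * RT d F n x y *
      (Real.sqrt (μ y / piT d F n y) - Real.sqrt (μ x / piT d F n x)) ^ 2

/-- The function `G(x) = Σᵢ 2(cosh(∂ᵢF(x)/2) - 1)`. -/
def GT (d : ℕ) (F : (Fin d → ℝ) → ℝ) (x : Fin d → ℝ) : ℝ :=
  ∑ i : Fin d, 2 * (Real.cosh (fderiv ℝ F x (Pi.single i 1) / 2) - 1)

/-- A function on `ℝ^d` is `ℤ^d`-periodic, i.e. well defined on the torus. -/
def PerT (d : ℕ) (g : (Fin d → ℝ) → ℝ) : Prop :=
  ∀ (x : Fin d → ℝ) (v : Fin d → ℤ), g (fun i => x i + (v i : ℝ)) = g x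

/-- The (Euclidean) torus distance. -/
def tdistT (d : ℕ) (x y : Fin d → ℝ) : ℝ :=
  ⨅ v : Fin d → ℤ, Real.sqrt (∑ i, (x i - y i - (v i : ℝ)) ^ 2)

/-- Membership in the (torus) cube of side `ε` centered at `z`. -/
def InCubeT (d : ℕ) (ε : ℝ) (z x : Fin d → ℝ) : Prop :=
  ∃ v : Fin d → ℤ, ∀ i, |x i - z i - (v i : ℝ)| ≤ ε / 2

/-- The discretized cube `Q^n_ε(z) = Q_ε(z) ∩ Ξ_n`. -/
def QT (d : ℕ) (ε : ℝ) (z : Fin d → ℝ) (n : ℕ) : Finset (Fin d → ℝ) :=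
  (XiT d n).filter (InCubeT d ε z)

/-- The Hessian matrix of `F` at `x`. -/
def HessT (d : ℕ) (F : (Fin d → ℝ) → ℝ) (x : Fin d → ℝ) : Matrix (Fin d) (Fin d) ℝ :=
  Matrix.of fun i j => fderiv ℝ (fun y => fderiv ℝ F y (Pi.single j 1)) x (Pi.single i 1)

/-! ### Periodic functions and Taylor's formula -/

lemma bounded_of_periodic {d : ℕ} {E : Type*} [SeminormedAddCommGroup E]
    {g : (Fin d → ℝ) → E} (hg : Continuous g)
    (hper : ∀ (x : Fin d → ℝ) (v : Fin d → ℤ), g (fun i => x i + (v i : ℝ)) = g x) :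
    ∃ C, 0 ≤ C ∧ ∀ x, ‖g x‖ ≤ C := by
  obtain ⟨C, hC⟩ := (isCompact_Icc (a := (0 : Fin d → ℝ)) (b := 1)).exists_bound_of_continuousOn
    hg.continuousOn
  refine ⟨C, (norm_nonneg _).trans (hC 0 ⟨le_rfl, zero_le_one⟩), fun x => ?_⟩
  have h := hper x (fun i => -⌊x i⌋)
  rw [← h]
  refine hC _ ⟨fun i => ?_, fun i => ?_⟩
  · have := Int.floor_le (x i)
    simp only [Pi.zero_apply]; push_cast; linarith
  · have := Int.lt_floor_add_one (x i)
    simp only [Pi.one_apply]; push_cast; linarith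

lemma fderiv_periodic {d : ℕ} {E : Type*} [NormedAddCommGroup E] [NormedSpace ℝ E]
    {g : (Fin d → ℝ) → E}
    (hper : ∀ (x : Fin d → ℝ) (v : Fin d → ℤ), g (fun i => x i + (v i : ℝ)) = g x)
    (x : Fin d → ℝ) (v : Fin d → ℤ) :
    fderiv ℝ g (fun i => x i + (v i : ℝ)) = fderiv ℝ g x := by
  have h : (fun y : Fin d → ℝ => g (y + fun i => (v i : ℝ))) = g := by
    funext y; exact hper y v
  have h2 := fderiv_comp_add_right (𝕜 := ℝ) (f := g) (x := x) (fun i => (v i : ℝ))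
  rw [h] at h2
  exact h2.symm

lemma taylor_bound {d : ℕ} {F : (Fin d → ℝ) → ℝ} (hper : PerT d F) (hF : ContDiff ℝ 2 F) :
    ∃ M, 0 ≤ M ∧ ∀ x u : Fin d → ℝ, |F (x + u) - F x - fderiv ℝ F x u| ≤ M * ‖u‖ ^ 2 := by
  have hF1 : ContDiff ℝ 1 (fderiv ℝ F) := hF.fderiv_right (by norm_num)
  obtain ⟨M, hM0, hM⟩ := bounded_of_periodic (hF1.continuous_fderiv (by norm_num))
    (fderiv_periodic (fderiv_periodic hper))
  refine ⟨M, hM0, fun x u => ?_⟩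
  have hl : ∀ y, ‖fderiv ℝ F y - fderiv ℝ F x‖ ≤ M * ‖y - x‖ := fun y =>
    convex_univ.norm_image_sub_le_of_norm_fderiv_le
      (fun z _ => (hF1.differentiable (by norm_num)) z) (fun z _ => hM z)
      (Set.mem_univ x) (Set.mem_univ y)
  have h := (convex_closedBall x ‖u‖).norm_image_sub_le_of_norm_fderiv_le' (𝕜 := ℝ)
    (f := F) (φ := fderiv ℝ F x) (C := M * ‖u‖) (x := x) (y := x + u)
    (fun z _ => (hF.differentiable (by norm_num)) z)
    (fun z hz => (hl z).trans (by
      gcongr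
      simpa [dist_eq_norm] using hz))
    (by simp) (by simp)
  simp only [add_sub_cancel_left, Real.norm_eq_abs] at h
  calc _ ≤ _ := h
    _ = _ := by ring

/-! ### Lower bounds on `G` -/

lemma GT_nonneg {d : ℕ} (F : (Fin d → ℝ) → ℝ) (x : Fin d → ℝ) : 0 ≤ GT d F x := by
  refine Finset.sum_nonneg fun i _ => ?_
  have := Real.one_le_cosh (fderiv ℝ F x (Pi.single i 1) / 2)
  linarith

lemma GT_pos {d : ℕ} (F : (Fin d → ℝ) → ℝ) (x : Fin d → ℝ) (h : fderiv ℝ F x ≠ 0) :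
    0 < GT d F x := by
  refine (GT_nonneg F x).lt_of_ne fun h0 => h ?_
  have h1 := (Finset.sum_eq_zero_iff_of_nonneg (fun i _ => by
    have := Real.one_le_cosh (fderiv ℝ F x (Pi.single i 1) / 2)
    linarith)).1 h0.symm
  ext u
  rw [← Finset.univ_sum_single u, map_sum]
  simp only [zero_apply]
  refine Finset.sum_eq_zero fun i hi => ?_
  have h2 : fderiv ℝ F x (Pi.single i 1) = 0 := by
    by_contra hne
    have := Real.one_lt_cosh.2 (div_ne_zero hne two_ne_zero)
    have := h1 i hi
    linarith
  have h3 : (Pi.single i (u i) : Fin d → ℝ) = u i • Pi.single i 1 := by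
    rw [← Pi.single_smul]; simp
  rw [h3, map_smul, h2, smul_zero]

lemma GT_lower_off_cubes {d : ℕ} {F : (Fin d → ℝ) → ℝ} (hper : PerT d F) (hF : ContDiff ℝ 2 F)
    {P : Finset (Fin d → ℝ)}
    (hP : ∀ z : Fin d → ℝ, z ∈ P ↔
      ((∀ i, z i ∈ Set.Ico (0 : ℝ) 1) ∧ fderiv ℝ F z = 0))
    {ε : ℝ} (hε : 0 < ε) :
    ∃ c, 0 < c ∧ ∀ x : Fin d → ℝ, (∀ i, x i ∈ Set.Ico (0 : ℝ) 1) →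
      (∀ z ∈ P, ¬ InCubeT d ε z x) → c ≤ GT d F x := by
  -- The complement of the open cubes, which is compact.
  set K : Set (Fin d → ℝ) := Set.Icc 0 1 ∩
    ⋂ z ∈ P, ⋂ v : Fin d → ℤ, ⋃ i : Fin d, {x | ε / 2 ≤ |x i - z i - (v i : ℝ)|} with hK
  have hKc : IsCompact K := by
    refine isCompact_Icc.inter_right ?_
    refine isClosed_biInter fun z _ => isClosed_iInter fun v => isClosed_iUnion_of_finite fun i => ?_
    exact isClosed_le continuous_const (by fun_prop)
  have hGc : Continuous (GT d F) := by
    have := hF.continuous_fderiv (by norm_num)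
    unfold GT
    refine continuous_finsetSum _ fun i _ => ?_
    have h1 : Continuous fun x => fderiv ℝ F x (Pi.single i 1) := this.clm_apply continuous_const
    exact continuous_const.mul ((Real.continuous_cosh.comp (h1.div_const 2)).sub continuous_const)
  have hpos : ∀ x ∈ K, 0 < GT d F x := by
    rintro x ⟨-, hx⟩
    refine GT_pos F x fun h0 => ?_
    have hz : (fun i => x i + ((-⌊x i⌋ : ℤ) : ℝ)) ∈ P := by
      rw [hP, fderiv_periodic hper x (fun i => -⌊x i⌋)]
      refine ⟨fun i => ⟨?_, ?_⟩, h0⟩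
      · have := Int.floor_le (x i)
        push_cast; linarith
      · have := Int.lt_floor_add_one (x i)
        push_cast; linarith
    simp only [Set.mem_iInter, Set.mem_iUnion, Set.mem_ofPred_eq] at hx
    obtain ⟨i, hi⟩ := hx _ hz (fun i => ⌊x i⌋)
    have : x i - (x i + ((-⌊x i⌋ : ℤ) : ℝ)) - (⌊x i⌋ : ℝ) = 0 := by push_cast; ring
    rw [this, abs_zero] at hi
    linarith
  obtain ⟨c, hc, hcK⟩ := hKc.exists_forall_le' hGc.continuousOn hpos
  refine ⟨c, hc, fun x hx hxP => hcK x ⟨⟨fun i => (hx i).1, fun i => (hx i).2.le⟩, ?_⟩⟩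
  simp only [Set.mem_iInter, Set.mem_iUnion, Set.mem_ofPred_eq]
  intro z hz v
  by_contra! hcon
  exact hxP z hz ⟨v, fun i => (hcon i).le⟩

/-! ### Geometry of the discretized torus -/

lemma mem_XiT {d n : ℕ} {x : Fin d → ℝ} :
    x ∈ XiT d n ↔ ∀ j, ∃ k : ℕ, k < n ∧ x j = (k : ℝ) / n := by
  simp only [XiT, Finset.mem_image, Finset.mem_univ, true_and]
  constructor
  · rintro ⟨k, rfl⟩ j
    exact ⟨k j, (k j).2, rfl⟩
  · intro h
    choose k hk hx using h
    exact ⟨fun j => ⟨k j, hk j⟩, by funext j; simp [hx j]⟩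

lemma XiT_Ico {d n : ℕ} {x : Fin d → ℝ} (hx : x ∈ XiT d n) (j : Fin d) :
    x j ∈ Set.Ico (0 : ℝ) 1 := by
  obtain ⟨k, hk, h⟩ := mem_XiT.1 hx j
  have hn : (0 : ℝ) < n := by exact_mod_cast (Nat.zero_le k).trans_lt hk
  rw [h]
  exact ⟨by positivity, (div_lt_one hn).2 (by exact_mod_cast hk)⟩

lemma NbrT_symm {d n : ℕ} {x y : Fin d → ℝ} (h : NbrT d n x y) : NbrT d n y x := by
  obtain ⟨i, s, hs, v, hv⟩ := h
  refine ⟨i, -s, by rcases hs with rfl | rfl <;> simp, fun j => -v j, fun j => ?_⟩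
  rw [hv j]
  push_cast
  split_ifs <;> ring

/-- The sign `±1` encoded by a Boolean. -/
def sgnT (b : Bool) : ℤ := if b then 1 else -1

/-- The neighbour of `x` in direction `± eᵢ`, as a representative in `[0,1)^d`. -/
def stepT (d n : ℕ) (x : Fin d → ℝ) (p : Fin d × Bool) : Fin d → ℝ :=
  fun j => Int.fract (x j + if j = p.1 then (sgnT p.2 : ℝ) / n else 0)

lemma stepT_mem {d n : ℕ} (hn : 0 < n) {x : Fin d → ℝ} (hx : x ∈ XiT d n)
    (p : Fin d × Bool) : stepT d n x p ∈ XiT d n := by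
  rw [mem_XiT]
  intro j
  obtain ⟨k, hk, h⟩ := mem_XiT.1 hx j
  have hnn : (0 : ℤ) < n := by exact_mod_cast hn
  obtain ⟨m, hm⟩ : ∃ m : ℤ, x j + (if j = p.1 then (sgnT p.2 : ℝ) / n else 0) = (m : ℝ) / n := by
    split_ifs
    · exact ⟨k + sgnT p.2, by rw [h]; push_cast; ring⟩
    · exact ⟨k, by rw [h]; push_cast; ring⟩
  have h0 := Int.emod_nonneg m hnn.ne'
  have h1 := Int.emod_lt_of_pos m hnn
  refine ⟨(m % n).toNat, by omega, ?_⟩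
  have hc : (((m % n).toNat : ℕ) : ℝ) = ((m % n : ℤ) : ℝ) := by
    exact_mod_cast congrArg (Int.cast : ℤ → ℝ) (Int.toNat_of_nonneg h0)
  have hnr : (0 : ℝ) < n := by exact_mod_cast hn
  rw [hc]
  unfold stepT
  rw [hm, Int.fract_eq_iff]
  refine ⟨div_nonneg (by exact_mod_cast h0) hnr.le,
    (div_lt_one hnr).2 (by exact_mod_cast h1), m / n, ?_⟩
  have : (m : ℝ) = ((m % n : ℤ) : ℝ) + n * ((m / n : ℤ) : ℝ) := by
    exact_mod_cast (Int.emod_add_mul_ediv m n).symm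
  rw [div_sub_div_same, div_eq_iff hnr.ne']
  linarith

/-- Steps `a/n` and `0` with `|a| ≤ 2 < n` agree modulo one only if `a = 0`; for `n = 2` the two
opposite neighbours coincide. -/
lemma int_div_eq_int {n : ℕ} (hn : 3 ≤ n) {a m : ℤ} (ha : |a| ≤ 2)
    (h : (a : ℝ) / n = m) : a = 0 := by
  have hnr : (n : ℝ) ≠ 0 := by exact_mod_cast (by omega : n ≠ 0)
  rw [div_eq_iff hnr] at h
  have h' : a = m * n := by exact_mod_cast h
  refine Int.eq_zero_of_abs_lt_dvd (m := n) ⟨m, by rw [h']; ring⟩ ?_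
  have : (3 : ℤ) ≤ n := by exact_mod_cast hn
  omega

lemma stepT_injective {d n : ℕ} (hn : 3 ≤ n) (x : Fin d → ℝ) :
    Function.Injective (stepT d n x) := by
  rintro ⟨i, b⟩ ⟨i', b'⟩ h
  have hi := congrFun h i
  simp only [stepT, if_true] at hi
  obtain ⟨m, hm⟩ := Int.fract_eq_fract.1 hi
  by_cases hii : i = i'
  · subst hii
    simp only [if_true] at hm
    have h0 := int_div_eq_int hn (a := sgnT b - sgnT b') (m := m)
      (by cases b <;> cases b' <;> simp [sgnT]) (by rw [← hm]; push_cast; ring)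
    cases b <;> cases b' <;> simp [sgnT] at h0 ⊢
  · rw [if_neg hii] at hm
    have h0 := int_div_eq_int hn (a := sgnT b) (m := m)
      (by cases b <;> simp [sgnT]) (by rw [← hm]; ring)
    cases b <;> simp [sgnT] at h0

lemma stepT_ne {d n : ℕ} (hn : 3 ≤ n) {x : Fin d → ℝ}
    (p : Fin d × Bool) : stepT d n x p ≠ x := by
  obtain ⟨i, b⟩ := p
  intro h
  have hi := congrFun h i
  simp only [stepT, if_true] at hi
  obtain ⟨-, -, m, hm⟩ := Int.fract_eq_iff.1 hi
  have h0 := int_div_eq_int hn (a := sgnT b) (m := m)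
    (by cases b <;> simp [sgnT]) (by rw [← hm]; ring)
  cases b <;> simp [sgnT] at h0

/-- For `n ≥ 3` each point has exactly `2d` neighbours, indexed by direction and sign. -/
lemma neighbours_eq {d n : ℕ} (hn : 3 ≤ n) {x : Fin d → ℝ} (hx : x ∈ XiT d n) :
    ((XiT d n).erase x).filter (NbrT d n x) = Finset.univ.image (stepT d n x) := by
  ext y
  simp only [Finset.mem_filter, Finset.mem_erase, Finset.mem_image, Finset.mem_univ, true_and]
  constructor
  · rintro ⟨⟨-, hy⟩, i, s, hs, v, hv⟩
    obtain ⟨b, rfl⟩ : ∃ b, (sgnT b : ℝ) = s := by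
      rcases hs with rfl | rfl
      · exact ⟨true, by simp [sgnT]⟩
      · exact ⟨false, by simp [sgnT]⟩
    refine ⟨(i, b), funext fun j => ?_⟩
    unfold stepT
    rw [Int.fract_eq_iff]
    refine ⟨(XiT_Ico hy j).1, (XiT_Ico hy j).2, -v j, ?_⟩
    rw [hv j]; push_cast; ring
  · rintro ⟨p, rfl⟩
    refine ⟨⟨stepT_ne hn p, stepT_mem (by omega) hx p⟩, p.1, sgnT p.2, ?_,
      fun j => -⌊x j + if j = p.1 then (sgnT p.2 : ℝ) / n else 0⌋, fun j => ?_⟩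
    · cases p.2 <;> simp [sgnT]
    · unfold stepT Int.fract
      push_cast; ring

lemma F_stepT {d n : ℕ} {F : (Fin d → ℝ) → ℝ} (hper : PerT d F) (x : Fin d → ℝ)
    (p : Fin d × Bool) :
    F (stepT d n x p) = F (x + ((sgnT p.2 : ℝ) / n) • Pi.single p.1 1) := by
  rw [← hper (x + _) (fun j => -⌊x j + if j = p.1 then (sgnT p.2 : ℝ) / n else 0⌋)]
  congr 1
  funext j
  simp only [stepT, Int.fract, Pi.add_apply, Pi.smul_apply, Pi.single_apply, smul_eq_mul,
    mul_ite, mul_one, mul_zero]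
  push_cast; ring

/-! ### The rate functional -/

/-- Bound for a single edge, from detailed balance and `2 √(μ(x) μ(y)) ≤ μ(x) + μ(y)`. -/
lemma edge_bound {d n : ℕ} (F μ : (Fin d → ℝ) → ℝ) {x y : Fin d → ℝ}
    (hZ : 0 < ZT d F n) (hx : 0 ≤ μ x) (hy : 0 ≤ μ y) (hxy : NbrT d n x y) :
    μ x * (RT d F n x y - 1) + μ y * (RT d F n y x - 1) ≤
    piT d F n x * RT d F n x y *
      (Real.sqrt (μ y / piT d F n y) - Real.sqrt (μ x / piT d F n x)) ^ 2 := by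
  -- `a` and `b` are the square roots of `π(x)` and `π(y)`.
  set a := Real.exp (-(n : ℝ) * F x / 2) / Real.sqrt (ZT d F n) with ha
  set b := Real.exp (-(n : ℝ) * F y / 2) / Real.sqrt (ZT d F n) with hb
  have hsZ : 0 < Real.sqrt (ZT d F n) := Real.sqrt_pos.2 hZ
  have ha0 : 0 < a := by positivity
  have hb0 : 0 < b := by positivity
  have hpi : ∀ z, piT d F n z = (Real.exp (-(n : ℝ) * F z / 2) / Real.sqrt (ZT d F n)) ^ 2 := by
    intro z
    rw [div_pow, Real.sq_sqrt hZ.le, ← Real.exp_nat_mul, piT]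
    congr 2; push_cast; ring
  have hR1 : RT d F n x y = b / a := by
    rw [RT, if_pos hxy, ha, hb, div_div_div_cancel_right₀ hsZ.ne', ← Real.exp_sub]
    congr 1; ring
  have hR2 : RT d F n y x = a / b := by
    rw [RT, if_pos (NbrT_symm hxy), ha, hb, div_div_div_cancel_right₀ hsZ.ne', ← Real.exp_sub]
    congr 1; ring
  rw [hR1, hR2, hpi x, hpi y, ← ha, ← hb, Real.sqrt_div hx, Real.sqrt_div hy,
    Real.sqrt_sq ha0.le, Real.sqrt_sq hb0.le]
  have e1 : μ x = Real.sqrt (μ x) ^ 2 := (Real.sq_sqrt hx).symm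
  have e2 : μ y = Real.sqrt (μ y) ^ 2 := (Real.sq_sqrt hy).symm
  set α := Real.sqrt (μ x)
  set β := Real.sqrt (μ y)
  rw [e1, e2]
  have : a ^ 2 * (b / a) * (β / b - α / a) ^ 2
      = α ^ 2 * (b / a - 1) + β ^ 2 * (a / b - 1) + (α - β) ^ 2 := by
    field_simp
    ring
  rw [this]
  nlinarith [sq_nonneg (α - β)]

lemma ZT_pos {d n : ℕ} (hn : 0 < n) (F : (Fin d → ℝ) → ℝ) : 0 < ZT d F n := by
  refine Finset.sum_pos (fun _ _ => Real.exp_pos _) ⟨0, mem_XiT.2 fun j => ⟨0, hn, by simp⟩⟩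

lemma IT_lower {d n : ℕ} (hn : 3 ≤ n) (F μ : (Fin d → ℝ) → ℝ)
    (hμ : ∀ x ∈ XiT d n, 0 ≤ μ x) :
    ∑ x ∈ XiT d n, μ x * ∑ p : Fin d × Bool, (RT d F n x (stepT d n x p) - 1) ≤ IT d F n μ := by
  set k : (Fin d → ℝ) → (Fin d → ℝ) → ℝ := fun x y =>
    if x ≠ y ∧ NbrT d n x y then μ x * (RT d F n x y - 1) else 0 with hk
  have hsum : ∀ x ∈ XiT d n, ∑ y ∈ XiT d n, k x y
      = μ x * ∑ p : Fin d × Bool, (RT d F n x (stepT d n x p) - 1) := by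
    intro x hx
    rw [← Finset.sum_image (f := fun y => RT d F n x y - 1)
      (fun a _ b _ h => stepT_injective hn x h), ← neighbours_eq hn hx, Finset.mul_sum,
      ← Finset.sum_filter]
    refine Finset.sum_congr ?_ fun _ _ => rfl
    ext y
    simp only [Finset.mem_filter, Finset.mem_erase]
    constructor
    · rintro ⟨a, b, c⟩; exact ⟨⟨b.symm, a⟩, c⟩
    · rintro ⟨⟨a, b⟩, c⟩; exact ⟨b, a.symm, c⟩
  rw [← Finset.sum_congr rfl hsum]
  have hsym : ∑ x ∈ XiT d n, ∑ y ∈ XiT d n, k x y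
      = (1 / 2) * ∑ x ∈ XiT d n, ∑ y ∈ XiT d n, (k x y + k y x) := by
    simp only [Finset.sum_add_distrib]
    rw [Finset.sum_comm (f := fun x y => k y x)]
    ring
  rw [hsym, IT]
  refine mul_le_mul_of_nonneg_left (Finset.sum_le_sum fun x hx => ?_) (by norm_num)
  rw [← Finset.add_sum_erase _ _ hx]
  have hkx : k x x = 0 := by simp [hk]
  rw [hkx, zero_add, zero_add]
  refine Finset.sum_le_sum fun y hy => ?_
  have hne := Finset.ne_of_mem_erase hy
  by_cases hN : NbrT d n x y
  · simp only [hk, if_pos (And.intro hne.symm hN), if_pos (And.intro hne (NbrT_symm hN))]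
    exact edge_bound F μ (ZT_pos (by omega) F) (hμ x hx) (hμ y (Finset.mem_of_mem_erase hy)) hN
  · have hN' : ¬ NbrT d n y x := fun h => hN (NbrT_symm h)
    simp [hk, hN, hN', RT]

lemma rate_lower {d : ℕ} {F : (Fin d → ℝ) → ℝ} (hper : PerT d F) (hF : ContDiff ℝ 2 F) :
    ∃ C, ∀ n : ℕ, 3 ≤ n → ∀ x ∈ XiT d n,
      GT d F x - C / n ≤ ∑ p : Fin d × Bool, (RT d F n x (stepT d n x p) - 1) := by
  obtain ⟨M, hM0, hM⟩ := taylor_bound hper hF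
  obtain ⟨B, hB0, hB⟩ := bounded_of_periodic
    (g := fun x => ∑ i : Fin d, Real.cosh (fderiv ℝ F x (Pi.single i 1) / 2))
    (by
      have := hF.continuous_fderiv (by norm_num)
      refine continuous_finsetSum _ fun i _ => ?_
      have h1 : Continuous fun x => fderiv ℝ F x (Pi.single i 1) := this.clm_apply continuous_const
      exact Real.continuous_cosh.comp (h1.div_const 2))
    (fun x v => by simp only [fderiv_periodic hper x v])
  refine ⟨M * B, fun n hn x hx => ?_⟩
  have hn0 : (0 : ℝ) < n := by exact_mod_cast (by omega : 0 < n)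
  have key : ∀ p : Fin d × Bool,
      Real.exp (-(sgnT p.2 : ℝ) * (fderiv ℝ F x (Pi.single p.1 1) / 2)) * (1 - M / (2 * n)) - 1
        ≤ RT d F n x (stepT d n x p) - 1 := by
    intro p
    have hmem : stepT d n x p ∈ ((XiT d n).erase x).filter (NbrT d n x) := by
      rw [neighbours_eq hn hx]; exact Finset.mem_image_of_mem _ (Finset.mem_univ _)
    rw [RT, if_pos (Finset.mem_filter.1 hmem).2, F_stepT hper]
    have hT := hM x (((sgnT p.2 : ℝ) / n) • Pi.single p.1 1)
    have hs : |(sgnT p.2 : ℝ)| = 1 := by cases p.2 <;> simp [sgnT]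
    rw [norm_smul, map_smul, smul_eq_mul, Pi.norm_single, norm_one, mul_one, Real.norm_eq_abs,
      abs_div, hs, abs_of_pos hn0] at hT
    set D := F (x + ((sgnT p.2 : ℝ) / n) • Pi.single p.1 1) - F x
    set a := fderiv ℝ F x (Pi.single p.1 1)
    have hD : (n : ℝ) / 2 * D ≤ (sgnT p.2 : ℝ) * (a / 2) + M / (2 * n) := by
      have h1 : D ≤ (sgnT p.2 : ℝ) / n * a + M * (1 / n) ^ 2 := by
        have := (abs_le.1 hT).2
        linarith
      calc (n : ℝ) / 2 * D ≤ n / 2 * ((sgnT p.2 : ℝ) / n * a + M * (1 / n) ^ 2) := by gcongr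
        _ = _ := by field_simp
    have h2 : 1 - M / (2 * n) ≤ Real.exp (-(M / (2 * n))) := Real.one_sub_le_exp_neg _
    have h3 : Real.exp (-(sgnT p.2 : ℝ) * (a / 2)) * (1 - M / (2 * n))
        ≤ Real.exp (-((n : ℝ) / 2) * D) := by
      calc _ ≤ Real.exp (-(sgnT p.2 : ℝ) * (a / 2)) * Real.exp (-(M / (2 * n))) := by gcongr
        _ = Real.exp (-(sgnT p.2 : ℝ) * (a / 2) + -(M / (2 * n))) := (Real.exp_add _ _).symm
        _ ≤ _ := Real.exp_le_exp.2 (by linarith)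
    linarith
  refine le_trans ?_ (Finset.sum_le_sum fun p _ => key p)
  rw [Fintype.sum_prod_type]
  have hc : ∀ i : Fin d, ∑ b : Bool,
      (Real.exp (-(sgnT b : ℝ) * (fderiv ℝ F x (Pi.single i 1) / 2)) * (1 - M / (2 * n)) - 1)
      = 2 * (Real.cosh (fderiv ℝ F x (Pi.single i 1) / 2) - 1)
        - M / n * Real.cosh (fderiv ℝ F x (Pi.single i 1) / 2) := by
    intro i
    rw [Fintype.sum_bool, Real.cosh_eq]
    simp only [sgnT, if_true, Bool.false_eq_true, if_false, Int.cast_one, Int.cast_neg, neg_neg,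
      one_mul, neg_one_mul]
    field_simp
    ring
  simp only [hc, Finset.sum_sub_distrib, ← Finset.mul_sum]
  have hBx := (le_abs_self _).trans (hB x)
  have : M / n * ∑ i : Fin d, Real.cosh (fderiv ℝ F x (Pi.single i 1) / 2) ≤ M * B / n := by
    calc _ ≤ M / n * B := by gcongr
      _ = _ := by ring
  have hG : GT d F x = 2 * (∑ i : Fin d, Real.cosh (fderiv ℝ F x (Pi.single i 1) / 2)
      - ∑ i : Fin d, (1 : ℝ)) := by
    rw [GT, ← Finset.mul_sum, Finset.sum_sub_distrib]
  linarith

/-- If `limsup n·ℐ_n(μ_n) < ∞`, then for every sufficiently small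
`ε ∈ (0,1)`, `limsup n·μ_n(Ξ_n \ ∪_{z∈𝒫} Q^n_ε(z)) < ∞`. -/
theorem stmt15 (d : ℕ) (F : (Fin d → ℝ) → ℝ)
    (hFper : PerT d F)
    (hFC2 : ContDiff ℝ 2 F)
    (hFLip : ∃ L : NNReal, LipschitzWith L (iteratedFDeriv ℝ 2 F))
    -- the set of critical points of `F` (as a subset of the torus) is the finite set `P`:
    (P : Finset (Fin d → ℝ))
    (hP : ∀ z : Fin d → ℝ, z ∈ P ↔
      ((∀ i, z i ∈ Set.Ico (0 : ℝ) 1) ∧ fderiv ℝ F z = 0))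
    -- the Hessian of `F` at critical points is non-degenerate:
    (hnd : ∀ z : Fin d → ℝ, fderiv ℝ F z = 0 → (HessT d F z).det ≠ 0)
    (μn : ℕ → (Fin d → ℝ) → ℝ)
    (hμn : ∀ n, 0 < n →
      (∀ x ∈ XiT d n, 0 ≤ μn n x) ∧ ∑ x ∈ XiT d n, μn n x = 1)
    (hbdd : Filter.IsBoundedUnder (· ≤ ·) atTop
      (fun n : ℕ => (n : ℝ) * IT d F n (μn n))) :
    ∃ ε₀ : ℝ, 0 < ε₀ ∧ ε₀ < 1 ∧ ∀ ε : ℝ, 0 < ε → ε ≤ ε₀ →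
      Filter.IsBoundedUnder (· ≤ ·) atTop
        (fun n : ℕ => (n : ℝ) *
          ∑ x ∈ XiT d n \ P.biUnion (fun z => QT d ε z n), μn n x) := by
  -- The bound holds for every `ε > 0`; `1 / 2` is an arbitrary choice.
  refine ⟨1 / 2, by norm_num, by norm_num, fun ε hε _ => ?_⟩
  obtain ⟨c, hc, hcG⟩ := GT_lower_off_cubes hFper hFC2 hP hε
  obtain ⟨C, hC⟩ := rate_lower hFper hFC2
  obtain ⟨A, hA⟩ := hbdd
  refine ⟨(A + C) / c, ?_⟩
  rw [eventually_map] at hA ⊢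
  filter_upwards [hA, eventually_ge_atTop 3] with n hAn hn
  obtain ⟨hμ0, hμ1⟩ := hμn n (by omega)
  have hn0 : (0 : ℝ) < n := by exact_mod_cast (by omega : 0 < n)
  set S := XiT d n \ P.biUnion (fun z => QT d ε z n) with hS
  have h1 : c * ∑ x ∈ S, μn n x ≤ ∑ x ∈ XiT d n, μn n x * GT d F x := by
    rw [Finset.mul_sum]
    calc _ ≤ ∑ x ∈ S, μn n x * GT d F x := by
          refine Finset.sum_le_sum fun x hx => ?_
          rw [hS, Finset.mem_sdiff] at hx
          rw [mul_comm]
          refine mul_le_mul_of_nonneg_left ?_ (hμ0 x hx.1)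
          refine hcG x (XiT_Ico hx.1) fun z hz hcube => hx.2 ?_
          exact Finset.mem_biUnion.2 ⟨z, hz, Finset.mem_filter.2 ⟨hx.1, hcube⟩⟩
      _ ≤ _ := Finset.sum_le_sum_of_subset_of_nonneg Finset.sdiff_subset
          fun x hx _ => mul_nonneg (hμ0 x hx) (GT_nonneg F x)
  have h2 : ∑ x ∈ XiT d n, μn n x * GT d F x - C / n ≤ IT d F n (μn n) := by
    refine le_trans ?_ (IT_lower hn F (μn n) hμ0)
    calc _ = ∑ x ∈ XiT d n, μn n x * (GT d F x - C / n) := by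
          simp only [mul_sub, Finset.sum_sub_distrib, ← Finset.sum_mul, hμ1, one_mul]
      _ ≤ _ := Finset.sum_le_sum fun x hx =>
          mul_le_mul_of_nonneg_left (hC n hn x hx) (hμ0 x hx)
  rw [le_div_iff₀ hc]
  have h3 : (n : ℝ) * (c * ∑ x ∈ S, μn n x) ≤ n * (IT d F n (μn n) + C / n) := by
    gcongr
    linarith
  have h4 : (n : ℝ) * (IT d F n (μn n) + C / n) = n * IT d F n (μn n) + C := by
    field_simp
  linarith

end
end

section
/- Let x ∈ 𝕋^d and let V : 𝕋^d → ℝ be of class C² with V(x) = 0 and V(y) ≥ min{ |y − x|²/2, 1 } for all y ∈ 𝕋^d, where |y − x| denotes the torus distance. Then the probability measures μ_n on Ξ_n defined by μ_n(y) := e^{−nV(y)} / Σ_{y'∈Ξ_n} e^{−nV(y')}, y ∈ Ξ_n, converge weakly, as probability measures on 𝕋^d, to the Dirac measure δ_x as n → ∞. -/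
/-!
The measure `μ_n` is a Gibbs measure at inverse temperature `n` on at most `n ^ d` points, and the
exponential concentration around the zero of `V` beats this polynomial count. Let `ε > 0`; by
continuity and periodicity `|g y - g x| < ε` at torus distance less than `δ` from `x`, and at
distance at least `δ` the lower bound gives `V y ≥ c := min (δ² / 2) 1 > 0`. Some grid point lies
within `1 / n` of `x` (`exists_mem_XiT_near`), so `V < c / 2` there for large `n`, and the partition
function is at least `e^{-nc/2}`. Each far point thus has mass at most `e^{-nc/2}`, and the far
points contribute at most `n ^ d * M * e^{-nc/2} → 0`, where `M` bounds `|g - g x|` on the unit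
cube. Only the continuity of `V` is needed, not its second derivatives.
-/

open Filter MeasureTheory
open scoped ENNReal Classical

noncomputable section

lemma card_XiT_le (d n : ℕ) : (XiT d n).card ≤ n ^ d := by
  refine Finset.card_image_le.trans ?_
  simp

lemma mem_Icc_of_mem_XiT {d n : ℕ} {y : Fin d → ℝ} (hy : y ∈ XiT d n) :
    y ∈ Set.Icc (0 : Fin d → ℝ) 1 := by
  simp only [XiT, Finset.mem_image, Finset.mem_univ, true_and] at hy
  obtain ⟨k, rfl⟩ := hy
  refine ⟨fun i => ?_, fun i => ?_⟩
  · simp only [Pi.zero_apply]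
    positivity
  · simp only [Pi.one_apply]
    exact div_le_one_of_le₀ (by exact_mod_cast (k i).2.le) (by positivity)

/-- The witness is `⌊n x⌋ / n`, reduced modulo `ℤ^d` to the fundamental domain. -/
lemma exists_mem_XiT_near (d : ℕ) (x : Fin d → ℝ) {n : ℕ} (hn : 0 < n) :
    ∃ y ∈ XiT d n, ∃ v : Fin d → ℤ, dist (fun i => y i + (v i : ℝ)) x ≤ 1 / n := by
  have hnz : (0 : ℤ) < n := by exact_mod_cast hn
  have hnr : (0 : ℝ) < n := by exact_mod_cast hn
  let m : Fin d → ℤ := fun i => ⌊(n : ℝ) * x i⌋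
  have hlt : ∀ i, (m i % n).toNat < n := fun i => by
    have h1 := Int.emod_nonneg (m i) hnz.ne'
    have h2 := Int.emod_lt_of_pos (m i) hnz
    omega
  refine ⟨_, Finset.mem_image_of_mem _ (Finset.mem_univ fun i => ⟨(m i % n).toNat, hlt i⟩),
    fun i => m i / n, ?_⟩
  rw [dist_pi_le_iff (by positivity)]
  intro i
  have h1 : (((m i % n).toNat : ℕ) : ℝ) = ((m i % n : ℤ) : ℝ) := by
    have := Int.toNat_of_nonneg (Int.emod_nonneg (m i) hnz.ne')
    exact_mod_cast congrArg (Int.cast : ℤ → ℝ) this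
  have h2 : ((m i % n : ℤ) : ℝ) + n * ((m i / n : ℤ) : ℝ) = m i := by
    exact_mod_cast Int.emod_add_mul_ediv (m i) n
  have h3 : (m i : ℝ) ≤ n * x i := Int.floor_le _
  have h4 : n * x i < (m i : ℝ) + 1 := Int.lt_floor_add_one _
  have h5 : (((m i % n).toNat : ℕ) : ℝ) / n + ((m i / n : ℤ) : ℝ) - x i
      = ((m i : ℝ) - n * x i) / n := by
    rw [h1, ← h2]
    field_simp
  simp only [Real.dist_eq]
  rw [h5, abs_div, abs_of_pos hnr]
  gcongr
  rw [abs_le]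
  constructor <;> linarith

/-- The sup distance is dominated by the Euclidean one, so a torus distance below `δ` gives a
representative of `y` within sup distance `δ` of `x`. -/
lemma exists_dist_lt_of_tdistT_lt {d : ℕ} {x y : Fin d → ℝ} {δ : ℝ} (hδ : 0 < δ)
    (h : tdistT d y x < δ) : ∃ v : Fin d → ℤ, dist (fun i => y i + (v i : ℝ)) x < δ := by
  obtain ⟨v, hv⟩ := exists_lt_of_ciInf_lt h
  refine ⟨fun i => -v i, ?_⟩
  rw [dist_pi_lt_iff hδ]
  intro i
  refine lt_of_le_of_lt ?_ hv
  rw [Real.dist_eq]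
  refine Real.abs_le_sqrt ?_
  calc (y i + ((-v i : ℤ) : ℝ) - x i) ^ 2 = (y i - x i - (v i : ℝ)) ^ 2 := by push_cast; ring
    _ ≤ _ := Finset.single_le_sum (f := fun i => (y i - x i - (v i : ℝ)) ^ 2)
        (fun _ _ => sq_nonneg _) (Finset.mem_univ i)

/-- Laplace lower bound for the partition function: for large `n` it is at least the term of one
grid point close to the zero `x` of `V`. -/
lemma eventually_exp_le_ZT {d : ℕ} {x : Fin d → ℝ} {V : (Fin d → ℝ) → ℝ} (hVper : PerT d V)
    (hV : Continuous V) (hVx : V x = 0) {a : ℝ} (ha : 0 < a) :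
    ∀ᶠ n : ℕ in atTop, Real.exp (-(n : ℝ) * a) ≤ ZT d V n := by
  obtain ⟨η, hη, hVη⟩ := Metric.continuousAt_iff.1 (hV.continuousAt (x := x)) a ha
  have hlim := (tendsto_one_div_atTop_nhds_zero_nat (𝕜 := ℝ)).eventually_lt_const hη
  filter_upwards [hlim, eventually_gt_atTop 0] with n hn hn0
  obtain ⟨y, hy, v, hv⟩ := exists_mem_XiT_near d x hn0
  have h1 := hVη (hv.trans_lt hn)
  rw [hVper y v, hVx, Real.dist_eq, sub_zero] at h1
  have h2 : V y ≤ a := (le_abs_self _).trans h1.le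
  calc Real.exp (-(n : ℝ) * a) ≤ Real.exp (-(n : ℝ) * V y) :=
        Real.exp_le_exp.2 (mul_le_mul_of_nonpos_left h2 (by simp))
    _ ≤ _ := Finset.single_le_sum (f := fun y => Real.exp (-(n : ℝ) * V y))
        (fun _ _ => (Real.exp_pos _).le) hy

/-- For a `C²` potential `V` on the torus vanishing only at `x`, with
`V(y) ≥ min{|y-x|²/2, 1}` (torus distance), the measures
`μ_n = e^{-nV}/Σ e^{-nV}` on `Ξ_n` converge weakly to `δ_x`. -/
theorem stmt18 (d : ℕ) (x : Fin d → ℝ)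
    (V : (Fin d → ℝ) → ℝ)
    (hVper : PerT d V)
    (hVC2 : ContDiff ℝ 2 V)
    (hVx : V x = 0)
    (hVlb : ∀ y : Fin d → ℝ, min (tdistT d y x ^ 2 / 2) 1 ≤ V y) :
    ∀ g : (Fin d → ℝ) → ℝ, Continuous g → PerT d g →
      Tendsto
        (fun n => ∑ y ∈ XiT d n,
          (Real.exp (-(n : ℝ) * V y) /
            ∑ y' ∈ XiT d n, Real.exp (-(n : ℝ) * V y')) * g y)
        atTop (nhds (g x)) := by
  intro g hg hgper
  obtain ⟨M, hM⟩ := (isCompact_Icc (a := (0 : Fin d → ℝ)) (b := 1)).exists_bound_of_continuousOn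
    (f := fun y => g y - g x) (by fun_prop)
  rw [Metric.tendsto_nhds]
  intro ε hε
  obtain ⟨δ, hδ, hgδ⟩ := Metric.continuousAt_iff.1 (hg.continuousAt (x := x)) (ε / 2) (half_pos hε)
  obtain ⟨c, hc, hcdef⟩ : ∃ c : ℝ, 0 < c ∧ c = min (δ ^ 2 / 2) 1 := ⟨_, by positivity, rfl⟩
  have hfar : Tendsto (fun n : ℕ => (n : ℝ) ^ d * Real.exp (-(c / 2) * n) * M) atTop (nhds 0) := by
    have h := ((tendsto_rpow_mul_exp_neg_mul_atTop_nhds_zero (d : ℝ) (c / 2)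
      (half_pos hc)).comp tendsto_natCast_atTop_atTop).mul_const M
    simpa [Function.comp_def] using h
  filter_upwards [hfar.eventually_lt_const (half_pos hε),
    eventually_exp_le_ZT hVper hVC2.continuous hVx (half_pos hc)] with n hn hZ
  change dist (∑ y ∈ XiT d n, piT d V n y * g y) (g x) < ε
  have hZpos : 0 < ZT d V n := (Real.exp_pos _).trans_le hZ
  have hnonneg : ∀ y, 0 ≤ piT d V n y := fun y => div_nonneg (Real.exp_pos _).le hZpos.le
  have hsum : ∑ y ∈ XiT d n, piT d V n y = 1 := by
    simp only [piT]
    rw [← Finset.sum_div]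
    exact div_self hZpos.ne'
  have hdiff : ∑ y ∈ XiT d n, piT d V n y * g y - g x
      = ∑ y ∈ XiT d n, piT d V n y * (g y - g x) := by
    simp only [mul_sub, Finset.sum_sub_distrib]
    rw [← Finset.sum_mul, hsum, one_mul]
  have hM0 : 0 ≤ M := (norm_nonneg _).trans (hM 0 ⟨le_rfl, zero_le_one⟩)
  -- Near points are controlled by the first summand, far points by the second.
  have hterm : ∀ y ∈ XiT d n, |piT d V n y * (g y - g x)|
      ≤ piT d V n y * (ε / 2) + Real.exp (-(c / 2) * n) * M := by
    intro y hy
    rw [abs_mul, abs_of_nonneg (hnonneg y)]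
    rcases lt_or_ge (tdistT d y x) δ with h | h
    · obtain ⟨v, hv⟩ := exists_dist_lt_of_tdistT_lt hδ h
      have h1 := hgδ hv
      rw [hgper y v, Real.dist_eq] at h1
      have h2 := mul_le_mul_of_nonneg_left h1.le (hnonneg y)
      have h3 : 0 ≤ Real.exp (-(c / 2) * n) * M := by positivity
      linarith
    · have hVc : c ≤ V y := by
        refine le_trans ?_ (hVlb y)
        rw [hcdef]
        gcongr
      have hw : piT d V n y ≤ Real.exp (-(c / 2) * n) := by
        rw [piT, div_le_iff₀ hZpos]
        calc Real.exp (-(n : ℝ) * V y) ≤ Real.exp (-(n : ℝ) * c) :=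
              Real.exp_le_exp.2 (mul_le_mul_of_nonpos_left hVc (by simp))
          _ = Real.exp (-(c / 2) * n) * Real.exp (-(n : ℝ) * (c / 2)) := by
              rw [← Real.exp_add]
              ring_nf
          _ ≤ _ := mul_le_mul_of_nonneg_left hZ (Real.exp_pos _).le
      have h1 := mul_le_mul hw (hM y (mem_Icc_of_mem_XiT hy)) (norm_nonneg _) (Real.exp_pos _).le
      rw [Real.norm_eq_abs] at h1
      have h2 : 0 ≤ piT d V n y * (ε / 2) := mul_nonneg (hnonneg y) (half_pos hε).le
      linarith
  have hcard : ((XiT d n).card : ℝ) ≤ (n : ℝ) ^ d := by exact_mod_cast card_XiT_le d n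
  rw [Real.dist_eq, hdiff]
  calc |∑ y ∈ XiT d n, piT d V n y * (g y - g x)|
      ≤ ∑ y ∈ XiT d n, (piT d V n y * (ε / 2) + Real.exp (-(c / 2) * n) * M) :=
        (Finset.abs_sum_le_sum_abs _ _).trans (Finset.sum_le_sum hterm)
    _ = ε / 2 + (XiT d n).card * (Real.exp (-(c / 2) * n) * M) := by
        rw [Finset.sum_add_distrib, ← Finset.sum_mul, hsum, Finset.sum_const, nsmul_eq_mul, one_mul]
    _ ≤ ε / 2 + (n : ℝ) ^ d * (Real.exp (-(c / 2) * n) * M) := by gcongr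
    _ < ε := by
        rw [← mul_assoc]
        linarith

end
end

section
/- Let V be a finite set, ν a probability measure on V with ν(x) > 0 for all x, R : V × V → [0,∞) jump rates, and D(h) := (1/2) Σ_{x∈V} Σ_{y∈V, y≠x} ν(x)R(x,y)(h(y) − h(x))² for h : V → ℝ. Let μ be a measure on V with total mass μ(V) ≤ 1, set f := μ/ν (i.e., f(x) = μ(x)/ν(x)), and let G : V → [0,∞). Suppose: (i) θ > 0 and C₀ < ∞ satisfy θ·Σ_{x∈V} ν(x)G(x) ≤ C₀, and (ii) for every h : V → ℝ, max_{x∈V} Σ_{y∈V} ν(y)(h(y) − h(x))² ≤ β·D(h) for some β > 0. Then, for every A > 0, | θ·Σ_{x∈V} ν(x)G(x)·( f(x) − Σ_{y∈V} ν(y)f(y) ) | ≤ A·( θ·Σ_{x∈V} μ(x)G(x) + C₀ ) + C₀·(β/A)·D(√f). -/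
/-!
Write `h = √f` with `f = μ / ν`. From `f x - f y = (h x - h y) (h x + h y)` and Young's inequality
with parameter `A`, `|f x - f y| ≤ A (f x + f y) + (h y - h x)² / A` (`abs_sub_le_sqrt_young`).
Averaging in `y` against `ν`, where `∑ ν f = ∑ μ ≤ 1`, and applying the spectral-gap hypothesis
to `h` gives `|f x - ∑ ν f| ≤ A (f x + 1) + (β / A) D(√f)` for each `x`. Averaging this against
`θ ν G`, whose total mass is at most `C₀`, gives the estimate.
-/

lemma abs_sub_le_sqrt_young {a b A : ℝ} (ha : 0 ≤ a) (hb : 0 ≤ b) (hA : 0 < A) :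
    |a - b| ≤ A * (a + b) + 1 / A * (Real.sqrt b - Real.sqrt a) ^ 2 := by
  obtain ⟨p, hp, rfl⟩ : ∃ p, 0 ≤ p ∧ a = p ^ 2 :=
    ⟨Real.sqrt a, Real.sqrt_nonneg a, (Real.sq_sqrt ha).symm⟩
  obtain ⟨q, hq, rfl⟩ : ∃ q, 0 ≤ q ∧ b = q ^ 2 :=
    ⟨Real.sqrt b, Real.sqrt_nonneg b, (Real.sq_sqrt hb).symm⟩
  rw [Real.sqrt_sq hp, Real.sqrt_sq hq]
  have h1 : 0 ≤ 1 / A * (q - p) ^ 2 := by positivity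
  have h2 : 0 ≤ A * (p - q) ^ 2 := by positivity
  have key : ∀ u : ℝ, u = q - p ∨ u = p - q →
      u * (p + q) ≤ A * (p ^ 2 + q ^ 2) + 1 / A * (q - p) ^ 2 := by
    intro u hu
    have hu2 : u ^ 2 = (q - p) ^ 2 := by rcases hu with rfl | rfl <;> ring
    -- Young's inequality, as the expansion of `(A (p + q) - u)² / A ≥ 0`.
    have h3 : 0 ≤ 1 / A * (A * (p + q) - u) ^ 2 := by positivity
    have h4 : 1 / A * (A * (p + q) - u) ^ 2 =
        A * (p + q) ^ 2 - 2 * (u * (p + q)) + 1 / A * u ^ 2 := by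
      field_simp
      ring
    rw [h4, hu2] at h3
    linarith
  refine abs_le.mpr ⟨?_, ?_⟩
  · linarith [key _ (Or.inl rfl)]
  · linarith [key _ (Or.inr rfl)]

/-- Quantitative replacement estimate: if `θ·Σ ν(x)G(x) ≤ C₀` and the
Poincaré-type inequality `max_x Σ_y ν(y)(h(y)-h(x))² ≤ β·D(h)` holds, then for all
`A > 0`,
`|θ·Σ ν(x)G(x)(f(x) - Σ ν(y)f(y))| ≤ A(θ·Σ μ(x)G(x) + C₀) + C₀(β/A)·D(√f)`. -/
theorem stmt19 (V : Type) [Fintype V] [DecidableEq V]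
    (ν : V → ℝ) (hνpos : ∀ x, 0 < ν x) (hνsum : ∑ x, ν x = 1)
    (R : V → V → ℝ) (hRnn : ∀ x y, 0 ≤ R x y)
    (μ : V → ℝ) (hμnn : ∀ x, 0 ≤ μ x) (hμmass : ∑ x, μ x ≤ 1)
    (G : V → ℝ) (hGnn : ∀ x, 0 ≤ G x)
    (θ : ℝ) (hθ : 0 < θ) (C₀ : ℝ)
    (hC₀ : θ * ∑ x, ν x * G x ≤ C₀)
    (β : ℝ) (hβ : 0 < β)
    (hgap : ∀ h : V → ℝ, ∀ x : V,
      ∑ y, ν y * (h y - h x) ^ 2 ≤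
        β * ((1 / 2) * ∑ a, ∑ b ∈ Finset.univ.erase a,
          ν a * R a b * (h b - h a) ^ 2)) :
    ∀ A : ℝ, 0 < A →
      |θ * ∑ x, ν x * G x * (μ x / ν x - ∑ y, ν y * (μ y / ν y))| ≤
        A * (θ * ∑ x, μ x * G x + C₀) +
          C₀ * (β / A) * ((1 / 2) * ∑ a, ∑ b ∈ Finset.univ.erase a,
            ν a * R a b *
              (Real.sqrt (μ b / ν b) - Real.sqrt (μ a / ν a)) ^ 2) := by
  intro A hA
  set f : V → ℝ := fun x => μ x / ν x with hf
  have hμf : ∀ x, ν x * f x = μ x := fun x => mul_div_cancel₀ _ (hνpos x).ne'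
  have hf0 : ∀ x, 0 ≤ f x := fun x => div_nonneg (hμnn x) (hνpos x).le
  have hgap' := hgap (fun x => Real.sqrt (f x))
  change |θ * ∑ x, ν x * G x * (f x - ∑ y, ν y * f y)| ≤
    A * (θ * ∑ x, μ x * G x + C₀) + C₀ * (β / A) * ((1 / 2) * ∑ a, ∑ b ∈ Finset.univ.erase a,
      ν a * R a b * (Real.sqrt (f b) - Real.sqrt (f a)) ^ 2)
  set D : ℝ := (1 / 2) * ∑ a, ∑ b ∈ Finset.univ.erase a,
    ν a * R a b * (Real.sqrt (f b) - Real.sqrt (f a)) ^ 2 with hD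
  have hD0 : 0 ≤ D := mul_nonneg (by norm_num) <| Finset.sum_nonneg fun a _ =>
    Finset.sum_nonneg fun b _ => mul_nonneg (mul_nonneg (hνpos a).le (hRnn a b)) (sq_nonneg _)
  have hmass : ∑ y, ν y * f y ≤ 1 := by simpa only [hμf] using hμmass
  have hpt : ∀ x, |f x - ∑ y, ν y * f y| ≤ A * (f x + 1) + β / A * D := by
    intro x
    have e : f x - ∑ y, ν y * f y = ∑ y, ν y * (f x - f y) := by
      simp only [mul_sub, Finset.sum_sub_distrib, ← Finset.sum_mul, hνsum, one_mul]
    calc |f x - ∑ y, ν y * f y| ≤ ∑ y, ν y * |f x - f y| := by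
          rw [e]
          refine (Finset.abs_sum_le_sum_abs _ _).trans_eq (Finset.sum_congr rfl fun y _ => ?_)
          rw [abs_mul, abs_of_pos (hνpos y)]
      _ ≤ ∑ y, ν y * (A * (f x + f y) + 1 / A * (Real.sqrt (f y) - Real.sqrt (f x)) ^ 2) :=
          Finset.sum_le_sum fun y _ => mul_le_mul_of_nonneg_left
            (abs_sub_le_sqrt_young (hf0 x) (hf0 y) hA) (hνpos y).le
      _ = A * f x * ∑ y, ν y + A * ∑ y, ν y * f y +
            1 / A * ∑ y, ν y * (Real.sqrt (f y) - Real.sqrt (f x)) ^ 2 := by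
          simp only [Finset.mul_sum, ← Finset.sum_add_distrib]
          exact Finset.sum_congr rfl fun y _ => by ring
      _ ≤ A * f x * 1 + A * 1 + 1 / A * (β * D) := by
          rw [hνsum]
          gcongr
          exact hgap' x
      _ = A * (f x + 1) + β / A * D := by ring
  calc |θ * ∑ x, ν x * G x * (f x - ∑ y, ν y * f y)|
      ≤ θ * ∑ x, ν x * G x * |f x - ∑ y, ν y * f y| := by
        rw [abs_mul, abs_of_pos hθ]
        refine mul_le_mul_of_nonneg_left ?_ hθ.le
        refine (Finset.abs_sum_le_sum_abs _ _).trans_eq (Finset.sum_congr rfl fun x _ => ?_)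
        rw [abs_mul, abs_of_nonneg (mul_nonneg (hνpos x).le (hGnn x))]
    _ ≤ θ * ∑ x, ν x * G x * (A * (f x + 1) + β / A * D) :=
        mul_le_mul_of_nonneg_left (Finset.sum_le_sum fun x _ => mul_le_mul_of_nonneg_left
          (hpt x) (mul_nonneg (hνpos x).le (hGnn x))) hθ.le
    _ = A * (θ * ∑ x, μ x * G x + θ * ∑ x, ν x * G x) +
          (θ * ∑ x, ν x * G x) * (β / A) * D := by
        simp only [Finset.mul_sum, Finset.sum_mul, ← Finset.sum_add_distrib]
        exact Finset.sum_congr rfl fun x _ => by rw [← hμf x]; ring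
    _ ≤ A * (θ * ∑ x, μ x * G x + C₀) + C₀ * (β / A) * D := by gcongr
end
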